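/- Let Λ be an artin algebra and P the class of finitely generated right Λ-modules of finite projective dimension. If P is contravariantly finite in mod Λ, then the finitistic dimension of Λ equals the maximum of the projective dimensions of the minimal right P-approximations of the indecomposable injective Λ-modules; in particular it is finite. -/

import Mathlib

open CategoryTheory

universe u

/-- The `n`-th Ext group of `A`-modules `M`, `N`. -/
noncomputable abbrev ext {A : Type u} [Ring A] (M N : ModuleCat.{u} A) (n : ℕ) : Type u :=
  ((Ext ℤ (ModuleCat.{u} A) n).obj (Opposite.op M)).obj N

/-- `Ext^i(N, M) = 0` for all `i > 0`. -/
def ExtVanish {A : Type u} [Ring A] (N M : ModuleCat.{u} A) : Prop :=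
  ∀ i, 0 < i → Subsingleton (ext N M i)

/-- `M` has projective dimension at most `n`, i.e. `Ext^i(M, -) = 0` for `i > n`. -/
def pdLE {A : Type u} [Ring A] (M : ModuleCat.{u} A) (n : ℕ) : Prop :=
  ∀ i, n < i → ∀ N : ModuleCat.{u} A, Subsingleton (ext M N i)

/-- The projective dimension of `M`, as an element of `ℕ∞` (`⊤` if infinite). -/
noncomputable def projDim {A : Type u} [Ring A] (M : ModuleCat.{u} A) : ℕ∞ :=
  sInf {d : ℕ∞ | ∃ n : ℕ, d = n ∧ pdLE M n}

/-- Membership in `𝒫`: finitely generated of finite projective dimension. -/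
def InP {A : Type u} [Ring A] (M : ModuleCat.{u} A) : Prop :=
  Module.Finite A M ∧ ∃ n, pdLE M n

/-- The finitistic dimension of `A`. -/
noncomputable def findim (A : Type u) [Ring A] : ℕ∞ :=
  sSup {d : ℕ∞ | ∃ M : ModuleCat.{u} A, InP M ∧ d = projDim M}

/-- `M` is a direct summand of `S`. -/
def IsSummand {A : Type u} [Ring A] (M S : ModuleCat.{u} A) : Prop :=
  ∃ (s : M →ₗ[A] S) (r : S →ₗ[A] M), r ∘ₗ s = LinearMap.id

/-- `M` belongs to `add 𝒳`: `M` is a direct summand of a finite direct sum of objects of `𝒳`. -/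
def InAddOf {A : Type u} [Ring A] (X : ModuleCat.{u} A → Prop) (M : ModuleCat.{u} A) : Prop :=
  ∃ (k : ℕ) (F : Fin k → ModuleCat.{u} A), (∀ i, X (F i)) ∧
    IsSummand M (ModuleCat.of A (DirectSum (Fin k) (fun i => ↥(F i))))

/-- `M` belongs to `Add T`: `M` is a direct summand of an arbitrary direct sum of copies of `T`. -/
def InAdd {A : Type u} [Ring A] (T M : ModuleCat.{u} A) : Prop :=
  ∃ ι : Type u, IsSummand M (ModuleCat.of A (DirectSum ι (fun _ => ↥T)))

/-- `M ∈ 𝒳^⊥`: `Ext^i(N, M) = 0` for all `N ∈ 𝒳` and `i > 0`. -/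
def InPerpOf {A : Type u} [Ring A] (X : ModuleCat.{u} A → Prop) (M : ModuleCat.{u} A) : Prop :=
  ∀ N, X N → ExtVanish N M

/-- `M` is Ext-injective in `𝒫`: `M ∈ 𝒫` and `Ext^1(N, M) = 0` for all `N ∈ 𝒫`. -/
def ExtInjInP {A : Type u} [Ring A] (M : ModuleCat.{u} A) : Prop :=
  InP M ∧ ∀ N : ModuleCat.{u} A, InP N → Subsingleton (ext N M 1)

/-- `M` is splitting injective in `𝒳`: every injective map `M → Y` with `Y ∈ add 𝒳` splits. -/
def SplittingInjIn {A : Type u} [Ring A] (X : ModuleCat.{u} A → Prop)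
    (M : ModuleCat.{u} A) : Prop :=
  ∀ Y : ModuleCat.{u} A, InAddOf X Y → ∀ f : M →ₗ[A] Y, Function.Injective f →
    ∃ r : Y →ₗ[A] M, r ∘ₗ f = LinearMap.id

/-- `0 → M₁ → M₂ → M₃ → 0` is a short exact sequence. -/
def ShortExact {A : Type u} [Ring A] {M₁ M₂ M₃ : ModuleCat.{u} A}
    (f : M₁ →ₗ[A] M₂) (g : M₂ →ₗ[A] M₃) : Prop :=
  Function.Injective f ∧ Function.Exact f g ∧ Function.Surjective g

/-- `f : XM → M` is a right `𝒳`-approximation of `M`. -/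
def IsRightApprox {A : Type u} [Ring A] (X : ModuleCat.{u} A → Prop)
    {XM M : ModuleCat.{u} A} (f : XM →ₗ[A] M) : Prop :=
  X XM ∧ ∀ Y : ModuleCat.{u} A, X Y → ∀ g : Y →ₗ[A] M, ∃ h : Y →ₗ[A] XM, f ∘ₗ h = g

/-- `f : XM → M` is a minimal right `𝒳`-approximation. -/
def IsMinimalRightApprox {A : Type u} [Ring A] (X : ModuleCat.{u} A → Prop)
    {XM M : ModuleCat.{u} A} (f : XM →ₗ[A] M) : Prop :=
  IsRightApprox X f ∧ ∀ g : XM →ₗ[A] XM, f ∘ₗ g = f → Function.Bijective g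

/-- `𝒳` is contravariantly finite in `mod A`. -/
def ContravariantlyFinite {A : Type u} [Ring A] (X : ModuleCat.{u} A → Prop) : Prop :=
  ∀ M : ModuleCat.{u} A, Module.Finite A M →
    ∃ (XM : ModuleCat.{u} A) (f : XM →ₗ[A] M), IsRightApprox X f

/-- `M` is an indecomposable module: nonzero, and its only idempotent endomorphisms
are `0` and the identity. -/
def Indec {A : Type u} [Ring A] (M : ModuleCat.{u} A) : Prop :=
  (¬ Subsingleton M) ∧ ∀ e : M →ₗ[A] M, e ∘ₗ e = e → e = 0 ∨ e = LinearMap.id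

/-- `L` admits a finite coresolution `0 → L → C^0 → ⋯ → C^n → 0` with all `C^i ∈ add T`. -/
def HasAddCoresolution {A : Type u} [Ring A] (T L : ModuleCat.{u} A) : Prop :=
  ∃ (C : ℕ → ModuleCat.{u} A) (d : ∀ i, C i →ₗ[A] C (i+1)) (f : L →ₗ[A] C 0),
    Function.Injective f ∧ Function.Exact f (d 0) ∧
    (∀ i, Function.Exact (d i) (d (i+1))) ∧
    (∀ i, InAddOf (fun X => X = T) (C i)) ∧
    (∃ m, ∀ i, m ≤ i → Subsingleton (C i))

/-- `T` is a tilting `A`-module. -/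
def IsTilting {A : Type u} [Ring A] (T : ModuleCat.{u} A) : Prop :=
  Module.Finite A T ∧ (∃ n, pdLE T n) ∧ ExtVanish T T ∧
    HasAddCoresolution T (ModuleCat.of A A)

/-- `𝒳` is a resolving subcategory of `mod A`. -/
def Resolving {A : Type u} [Ring A] (X : ModuleCat.{u} A → Prop) : Prop :=
  (∀ M : ModuleCat.{u} A, Module.Finite A M → Module.Projective A M → X M) ∧
  (∀ (M₁ M₂ M₃ : ModuleCat.{u} A) (f : M₁ →ₗ[A] M₂) (g : M₂ →ₗ[A] M₃),
      ShortExact f g → X M₁ → X M₃ → X M₂) ∧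
  (∀ (M₁ M₂ M₃ : ModuleCat.{u} A) (f : M₁ →ₗ[A] M₂) (g : M₂ →ₗ[A] M₃),
      ShortExact f g → X M₂ → X M₃ → X M₁)

/-- `F` is a complete irredundant family of representatives of the isomorphism classes of
indecomposable Ext-injective modules in `𝒫`. -/
def IsCompleteExtInjFamily {A : Type u} [Ring A] {ι : Type u}
    (F : ι → ModuleCat.{u} A) : Prop :=
  (∀ i, Indec (F i) ∧ ExtInjInP (F i)) ∧
  (∀ M : ModuleCat.{u} A, Indec M → ExtInjInP M → ∃ i, Nonempty (M ≃ₗ[A] F i)) ∧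
  (∀ i j, Nonempty (F i ≃ₗ[A] F j) → i = j)

/-- `I` is a complete set of pairwise non-isomorphic indecomposable injective modules. -/
def IsCompleteIndecInjFamily {A : Type u} [Ring A] {n : ℕ}
    (I : Fin n → ModuleCat.{u} A) : Prop :=
  (∀ j, Module.Finite A (I j) ∧ Module.Injective A (I j) ∧ Indec (I j)) ∧
  (∀ M : ModuleCat.{u} A, Module.Finite A M → Module.Injective A M → Indec M →
      ∃ j, Nonempty (M ≃ₗ[A] I j)) ∧
  (∀ j k, Nonempty (I j ≃ₗ[A] I k) → j = k)


section ProjectiveDimension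

variable {B : Type u} [Ring B]

theorem subsingleton_ext_succ_iff {M N : ModuleCat.{u} B} (P : ProjectiveResolution M) (p : ℕ) :
    Subsingleton (ext M N (p + 1)) ↔
      ∀ φ : P.complex.X (p + 1) ⟶ N, P.complex.d (p + 2) (p + 1) ≫ φ = 0 →
        ∃ ψ : P.complex.X p ⟶ N, P.complex.d (p + 1) p ≫ ψ = φ := by
  rw [← ModuleCat.isZero_iff_subsingleton, (P.isoExt (R := ℤ) (p + 1) N).isZero_iff,
    ← HomologicalComplex.exactAt_iff_isZero_homology,
    HomologicalComplex.exactAt_iff' _ p (p + 1) (p + 2) (by simp) (by simp),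
    ShortComplex.moduleCat_exact_iff]
  rfl

theorem pdLE_iff_hasProjectiveDimensionLE {M : ModuleCat.{u} B} {n : ℕ} :
    pdLE M n ↔ HasProjectiveDimensionLE M n := by
  let P := projectiveResolution M
  rw [HasProjectiveDimensionLE, hasProjectiveDimensionLT_iff.{u}]
  constructor
  · rintro h (_ | p) hi N e
    · omega
    obtain ⟨φ, hφ, rfl⟩ := P.extMk_surjective e (p + 2) rfl
    rw [P.extMk_eq_zero_iff _ _ _ _ p rfl]
    exact (subsingleton_ext_succ_iff P p).1 (h _ (by omega) N) φ hφ
  · rintro h (_ | p) hi N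
    · omega
    rw [subsingleton_ext_succ_iff P]
    intro φ hφ
    rw [← P.extMk_eq_zero_iff _ (p + 2) rfl hφ p rfl]
    exact h _ (by omega) _

theorem pdLE.mono {M : ModuleCat.{u} B} {m n : ℕ} (h : pdLE M m) (hmn : m ≤ n) : pdLE M n :=
  fun i hi N => h i (hmn.trans_lt hi) N

theorem pdLE_of_projective (M : ModuleCat.{u} B) [Module.Projective B M] : pdLE M 0 :=
  pdLE_iff_hasProjectiveDimensionLE.2 <| (projective_iff_hasProjectiveDimensionLE_zero _).1 <|
    (IsProjective.iff_projective _).1 inferInstance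

theorem pdLE.retract {M N : ModuleCat.{u} B} {n : ℕ} (hN : pdLE N n) (s : M →ₗ[B] N)
    (r : N →ₗ[B] M) (hrs : r ∘ₗ s = LinearMap.id) : pdLE M n := by
  rw [pdLE_iff_hasProjectiveDimensionLE] at hN ⊢
  have : Retract M N := ⟨ModuleCat.ofHom s, ModuleCat.ofHom r, by
    rw [← ModuleCat.ofHom_comp, hrs]; rfl⟩
  exact this.hasProjectiveDimensionLT _

section ShortExact

variable {M₁ M₂ M₃ : ModuleCat.{u} B} {f : M₁ →ₗ[B] M₂} {g : M₂ →ₗ[B] M₃} {n : ℕ}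

theorem ShortExact.exists_shortComplex (h : ShortExact f g) :
    ∃ S : ShortComplex (ModuleCat.{u} B), S.ShortExact ∧ S.X₁ = M₁ ∧ S.X₂ = M₂ ∧ S.X₃ = M₃ :=
  ⟨⟨ModuleCat.ofHom f, ModuleCat.ofHom g, by
      rw [← ModuleCat.ofHom_comp, h.2.1.linearMap_comp_eq_zero]; rfl⟩,
    { exact := (ShortComplex.ShortExact.moduleCat_exact_iff_function_exact _).2 h.2.1
      mono_f := (ModuleCat.mono_iff_injective _).2 h.1
      epi_g := (ModuleCat.epi_iff_surjective _).2 h.2.2 }, rfl, rfl, rfl⟩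

theorem ShortExact.pdLE_middle (h : ShortExact f g) (h₁ : pdLE M₁ n) (h₃ : pdLE M₃ n) :
    pdLE M₂ n := by
  obtain ⟨S, hS, rfl, rfl, rfl⟩ := h.exists_shortComplex
  rw [pdLE_iff_hasProjectiveDimensionLE] at *
  exact hS.hasProjectiveDimensionLT_X₂ _ h₁ h₃

theorem ShortExact.pdLE_left (h : ShortExact f g) (h₂ : pdLE M₂ n) (h₃ : pdLE M₃ (n + 1)) :
    pdLE M₁ n := by
  obtain ⟨S, hS, rfl, rfl, rfl⟩ := h.exists_shortComplex
  rw [pdLE_iff_hasProjectiveDimensionLE] at *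
  exact hS.hasProjectiveDimensionLT_X₁ _ h₂ h₃

theorem ShortExact.pdLE_right (h : ShortExact f g) (h₁ : pdLE M₁ n) (h₂ : pdLE M₂ (n + 1)) :
    pdLE M₃ (n + 1) := by
  obtain ⟨S, hS, rfl, rfl, rfl⟩ := h.exists_shortComplex
  rw [pdLE_iff_hasProjectiveDimensionLE] at *
  exact hS.hasProjectiveDimensionLT_X₃ _ h₁ h₂

theorem ShortExact.inP_middle (h : ShortExact f g) (h₁ : InP M₁) (h₃ : InP M₃) : InP M₂ := by
  obtain ⟨_, m, hm⟩ := h₁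
  obtain ⟨_, k, hk⟩ := h₃
  refine ⟨?_, max m k, h.pdLE_middle (hm.mono (le_max_left _ _)) (hk.mono (le_max_right _ _))⟩
  have : Module.Finite B (LinearMap.ker g) := by
    rw [LinearMap.exact_iff.1 h.2.1]; infer_instance
  have : Module.Finite B (M₂ ⧸ LinearMap.ker g) :=
    .equiv (g.quotKerEquivOfSurjective h.2.2).symm
  exact .of_submodule_quotient (LinearMap.ker g)

theorem ShortExact.inP_left [IsNoetherianRing B] (h : ShortExact f g) (h₂ : InP M₂)
    (h₃ : InP M₃) : InP M₁ := by
  obtain ⟨_, m, hm⟩ := h₂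
  obtain ⟨_, k, hk⟩ := h₃
  exact ⟨.of_injective f h.1, max m k,
    h.pdLE_left (hm.mono (le_max_left _ _)) (hk.mono (by omega))⟩

theorem ShortExact.inP_right (h : ShortExact f g) (h₁ : InP M₁) (h₂ : InP M₂) : InP M₃ := by
  obtain ⟨_, m, hm⟩ := h₁
  obtain ⟨_, k, hk⟩ := h₂
  exact ⟨.of_surjective g h.2.2, max m k + 1,
    h.pdLE_right (hm.mono (le_max_left _ _)) (hk.mono (by omega))⟩

end ShortExact

theorem projDim_le_iff {M : ModuleCat.{u} B} {n : ℕ} : projDim M ≤ n ↔ pdLE M n := by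
  refine ⟨fun h => ?_, fun h => sInf_le ⟨n, rfl, h⟩⟩
  obtain ⟨_, ⟨m, rfl, hm⟩, hlt⟩ : ∃ d ∈ {d : ℕ∞ | ∃ n : ℕ, d = n ∧ pdLE M n}, d < n + 1 := by
    apply sInf_lt_iff.1
    exact h.trans_lt (by exact_mod_cast Nat.lt_succ_self n)
  exact hm.mono (Nat.lt_succ_iff.1 (by exact_mod_cast hlt))

end ProjectiveDimension

section Lifting

variable {B : Type u} [Ring B]

theorem exists_comp_eq_of_exact {M₁ M₂ M₃ K : Type*} [AddCommGroup M₁] [AddCommGroup M₂]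
    [AddCommGroup M₃] [AddCommGroup K] [Module B M₁] [Module B M₂] [Module B M₃] [Module B K]
    {i : M₁ →ₗ[B] M₂} {c : M₂ →ₗ[B] M₃} (hi : Function.Injective i) (hic : Function.Exact i c)
    (φ : K →ₗ[B] M₂) (h : c ∘ₗ φ = 0) : ∃ φ' : K →ₗ[B] M₁, i ∘ₗ φ' = φ := by
  refine ⟨(LinearEquiv.ofInjective i hi).symm.toLinearMap ∘ₗ
    φ.codRestrict (LinearMap.range i) fun k => (hic _).1 (LinearMap.congr_fun h k), ?_⟩
  ext k
  exact congrArg Subtype.val ((LinearEquiv.ofInjective i hi).apply_symm_apply _)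

/-- `φ` vanishing on the kernel of a surjection `g` factors through `g`. -/
theorem exists_comp_eq_of_surjective {F N T : Type*} [AddCommGroup F] [AddCommGroup N]
    [AddCommGroup T] [Module B F] [Module B N] [Module B T] {g : F →ₗ[B] N}
    (hg : Function.Surjective g) (φ : F →ₗ[B] T) (h : φ ∘ₗ (LinearMap.ker g).subtype = 0) :
    ∃ φ' : N →ₗ[B] T, φ' ∘ₗ g = φ := by
  refine ⟨(LinearMap.ker g).liftQ φ (fun x hx => LinearMap.congr_fun h ⟨x, hx⟩) ∘ₗ
    (g.quotKerEquivOfSurjective hg).symm.toLinearMap, ?_⟩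
  ext x
  have : (g.quotKerEquivOfSurjective hg).symm (g x) = Submodule.Quotient.mk x := by
    rw [LinearEquiv.symm_apply_eq]; rfl
  simp only [LinearMap.comp_apply, LinearEquiv.coe_coe, this]
  exact Submodule.liftQ_apply ..

/-- The pushout of an extension `0 → ker g → F → N → 0` along `α : ker g → X`. -/
theorem exists_pushout {X F N : ModuleCat.{u} B} (g : F →ₗ[B] N) (hg : Function.Surjective g)
    (α : LinearMap.ker g →ₗ[B] X) :
    ∃ (Z : ModuleCat.{u} B) (ι : X →ₗ[B] Z) (j : F →ₗ[B] Z) (π : Z →ₗ[B] N),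
      ShortExact ι π ∧ π ∘ₗ j = g ∧ ι ∘ₗ α = j ∘ₗ (LinearMap.ker g).subtype ∧
      (∀ (T : ModuleCat.{u} B) (a : X →ₗ[B] T) (b : F →ₗ[B] T),
        a ∘ₗ α = b ∘ₗ (LinearMap.ker g).subtype → ∃ u : Z →ₗ[B] T, u ∘ₗ ι = a ∧ u ∘ₗ j = b) ∧
      (∀ (T : ModuleCat.{u} B) (a b : Z →ₗ[B] T), a ∘ₗ ι = b ∘ₗ ι → a ∘ₗ j = b ∘ₗ j → a = b) := by
  let S : Submodule B (X × F) := LinearMap.range (α.prod (-(LinearMap.ker g).subtype))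
  have hS : ∀ (x : X) (y : F), (x, y) ∈ S ↔ ∃ k : LinearMap.ker g, α k = x ∧ -(k : F) = y := by
    intro x y
    simp [S, LinearMap.mem_range, Prod.ext_iff]
  have hSg : S ≤ LinearMap.ker (g ∘ₗ LinearMap.snd B X F) := by
    rintro ⟨x, y⟩ h
    obtain ⟨k, rfl, rfl⟩ := (hS _ _).1 h
    simp
  refine ⟨ModuleCat.of B ((X × F) ⧸ S), S.mkQ ∘ₗ LinearMap.inl B X F,
    S.mkQ ∘ₗ LinearMap.inr B X F, S.liftQ _ hSg, ⟨?_, ?_, ?_⟩, ?_, ?_, ?_, ?_⟩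
  · refine (injective_iff_map_eq_zero _).2 fun x hx => ?_
    obtain ⟨k, rfl, hk⟩ := (hS _ _).1 ((Submodule.Quotient.mk_eq_zero S).1 hx)
    have : k = 0 := by simpa using hk
    simp [this]
  · intro z
    obtain ⟨⟨x, y⟩, rfl⟩ := S.mkQ_surjective z
    constructor
    · intro h
      have hy : g y = 0 := h
      refine ⟨x + α ⟨y, hy⟩, (Submodule.Quotient.eq S).2 ((hS _ _).2 ⟨⟨y, hy⟩, ?_, ?_⟩)⟩ <;> simp
    · rintro ⟨x', h⟩
      rw [← h]
      change g (0 : F) = 0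
      simp
  · intro x
    obtain ⟨y, rfl⟩ := hg x
    exact ⟨S.mkQ (0, y), rfl⟩
  · ext y
    rfl
  · ext k
    exact (Submodule.Quotient.eq S).2 ((hS _ _).2 ⟨k, by simp⟩)
  · intro T a b h
    refine ⟨S.liftQ (a.coprod b) ?_, ?_, ?_⟩
    · rintro ⟨x, y⟩ hxy
      obtain ⟨k, rfl, rfl⟩ := (hS _ _).1 hxy
      have := LinearMap.congr_fun h k
      simp at this
      simp [this]
    · ext x
      exact (a.coprod_apply b (x, 0)).trans (by simp)
    · ext x
      exact (a.coprod_apply b (0, x)).trans (by simp)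
  · intro T a b h₁ h₂
    apply Submodule.linearMap_qext
    apply LinearMap.prod_ext
    · exact h₁
    · exact h₂

/-- `f` has the right lifting property with respect to the inclusions `ker g → F`, where
`g : F → N` is a surjection from a finitely generated projective module to a module in `𝒫`. -/
def HasLifting {X C : ModuleCat.{u} B} (f : X →ₗ[B] C) : Prop :=
  ∀ (N F : ModuleCat.{u} B) (g : F →ₗ[B] N), InP N → Module.Finite B F → Module.Projective B F →
    Function.Surjective g → ∀ (α : LinearMap.ker g →ₗ[B] X) (β : F →ₗ[B] C),
      f ∘ₗ α = β ∘ₗ (LinearMap.ker g).subtype →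
        ∃ ψ : F →ₗ[B] X, ψ ∘ₗ (LinearMap.ker g).subtype = α ∧ f ∘ₗ ψ = β

theorem exists_projective_presentation (N : ModuleCat.{u} B) [Module.Finite B N] :
    ∃ (F : ModuleCat.{u} B) (g : F →ₗ[B] N), Module.Finite B F ∧ Module.Projective B F ∧
      Function.Surjective g := by
  obtain ⟨n, g, hg⟩ := Module.Finite.exists_fin' B N
  exact ⟨ModuleCat.of B (Fin n → B), g, inferInstanceAs (Module.Finite B (Fin n → B)),
    inferInstanceAs (Module.Projective B (Fin n → B)), hg⟩

theorem shortExact_ker {F N : ModuleCat.{u} B} {g : F →ₗ[B] N} (hg : Function.Surjective g) :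
    ShortExact (M₁ := ModuleCat.of B (LinearMap.ker g)) (LinearMap.ker g).subtype g :=
  ⟨Subtype.val_injective, LinearMap.exact_subtype_ker_map g, hg⟩

theorem InP.of_projective {F : ModuleCat.{u} B} (h : Module.Finite B F)
    (_ : Module.Projective B F) : InP F :=
  ⟨h, 0, pdLE_of_projective F⟩

theorem HasLifting.exists_lift {X C : ModuleCat.{u} B} {f : X →ₗ[B] C} (hf : HasLifting f)
    {N : ModuleCat.{u} B} (hN : InP N) (h : N →ₗ[B] C) : ∃ h' : N →ₗ[B] X, f ∘ₗ h' = h := by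
  have := hN.1
  obtain ⟨F, g, hF, hF', hg⟩ := exists_projective_presentation N
  obtain ⟨ψ, hψ, hψ'⟩ := hf N F g hN hF hF' hg 0 (h ∘ₗ g) (by ext; simp)
  obtain ⟨h', rfl⟩ := exists_comp_eq_of_surjective hg ψ hψ
  refine ⟨h', LinearMap.ext fun x => ?_⟩
  obtain ⟨y, rfl⟩ := hg x
  exact LinearMap.congr_fun hψ' y

/-- Wakamatsu's lemma, in terms of lifting. -/
theorem IsMinimalRightApprox.hasLifting {X C : ModuleCat.{u} B} {f : X →ₗ[B] C}
    (hf : IsMinimalRightApprox InP f) : HasLifting f := by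
  intro N F g hN hF hF' hg α β hαβ
  obtain ⟨Z, ι, j, π, hιπ, -, hαj, hdesc, -⟩ := exists_pushout g hg α
  obtain ⟨v, hvι, hvj⟩ := hdesc C f β hαβ
  obtain ⟨u, hu⟩ := hf.1.2 Z (hιπ.inP_middle hf.1.1 hN) v
  have hfu : f ∘ₗ (u ∘ₗ ι) = f := by rw [← LinearMap.comp_assoc, hu, hvι]
  let e := LinearEquiv.ofBijective (u ∘ₗ ι) (hf.2 _ hfu)
  have he : ∀ x, f (e.symm x) = f x := fun x => by
    conv_rhs => rw [← e.apply_symm_apply x]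
    exact (LinearMap.congr_fun hfu _).symm
  refine ⟨e.symm.toLinearMap ∘ₗ u ∘ₗ j, ?_, ?_⟩
  · ext k
    have : j k = ι (α k) := (LinearMap.congr_fun hαj k).symm
    simp only [LinearMap.comp_apply, Submodule.subtype_apply, this]
    exact e.symm_apply_apply _
  · ext y
    have h₁ : f (u (j y)) = v (j y) := LinearMap.congr_fun hu _
    have h₂ : v (j y) = β y := LinearMap.congr_fun hvj _
    simp [he, h₁, h₂]

theorem HasLifting.of_shortExact {X₁ X₂ X₃ C₁ C₂ C₃ : ModuleCat.{u} B}
    {ι : X₁ →ₗ[B] X₂} {π : X₂ →ₗ[B] X₃} {i : C₁ →ₗ[B] C₂} {c : C₂ →ₗ[B] C₃}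
    {f₁ : X₁ →ₗ[B] C₁} {f₂ : X₂ →ₗ[B] C₂} {f₃ : X₃ →ₗ[B] C₃}
    (hX : ShortExact ι π) (hi : Function.Injective i) (hic : Function.Exact i c)
    (h₁₂ : f₂ ∘ₗ ι = i ∘ₗ f₁) (h₂₃ : c ∘ₗ f₂ = f₃ ∘ₗ π)
    (h₁ : HasLifting f₁) (h₃ : HasLifting f₃) : HasLifting f₂ := by
  intro N F g hN hF hF' hg α β hαβ
  obtain ⟨ψ₃, hψ₃, hfψ₃⟩ := h₃ N F g hN hF hF' hg (π ∘ₗ α) (c ∘ₗ β) (by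
    rw [← LinearMap.comp_assoc, ← h₂₃, LinearMap.comp_assoc, hαβ, LinearMap.comp_assoc])
  obtain ⟨χ, hχ⟩ := Module.projective_lifting_property π ψ₃ hX.2.2
  obtain ⟨α', hα'⟩ := exists_comp_eq_of_exact hX.1 hX.2.1
    (α - χ ∘ₗ (LinearMap.ker g).subtype) (by
      rw [LinearMap.comp_sub, ← LinearMap.comp_assoc, hχ, hψ₃, sub_self])
  obtain ⟨β', hβ'⟩ := exists_comp_eq_of_exact hi hic (β - f₂ ∘ₗ χ) (by
      rw [LinearMap.comp_sub, ← LinearMap.comp_assoc, h₂₃, LinearMap.comp_assoc, hχ, hfψ₃,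
        sub_self])
  obtain ⟨ψ₁, hψ₁, hfψ₁⟩ := h₁ N F g hN hF hF' hg α' β' (by
    apply LinearMap.ext
    intro k
    apply hi
    have e₁ := LinearMap.congr_fun h₁₂ (α' k)
    have e₂ := LinearMap.congr_fun hα' k
    have e₃ := LinearMap.congr_fun hβ' k
    have e₄ := LinearMap.congr_fun hαβ k
    simp only [LinearMap.comp_apply, LinearMap.sub_apply, Submodule.subtype_apply] at *
    rw [← e₁, e₂, e₃, map_sub, e₄])
  refine ⟨χ + ι ∘ₗ ψ₁, ?_, ?_⟩
  · rw [LinearMap.add_comp, LinearMap.comp_assoc, hψ₁, hα', add_sub_cancel]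
  · rw [LinearMap.comp_add, ← LinearMap.comp_assoc, h₁₂, LinearMap.comp_assoc, hfψ₁, hβ',
      add_sub_cancel]

/-- `C` is the target of a map with the lifting property from a finitely generated module of
projective dimension at most `n`. -/
def IsResolved (n : ℕ) (C : ModuleCat.{u} B) : Prop :=
  ∃ (X : ModuleCat.{u} B) (f : X →ₗ[B] C), Module.Finite B X ∧ pdLE X n ∧ HasLifting f

theorem IsResolved.mono {m n : ℕ} {C : ModuleCat.{u} B} (h : IsResolved m C) (hmn : m ≤ n) :
    IsResolved n C := by
  obtain ⟨X, f, hX, hpd, hf⟩ := h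
  exact ⟨X, f, hX, hpd.mono hmn, hf⟩

theorem IsResolved.of_equiv {n : ℕ} {C D : ModuleCat.{u} B} (h : IsResolved n C)
    (e : C ≃ₗ[B] D) : IsResolved n D := by
  obtain ⟨X, f, hX, hpd, hf⟩ := h
  refine ⟨X, e.toLinearMap ∘ₗ f, hX, hpd, fun N F g hN hF hF' hg α β hαβ => ?_⟩
  obtain ⟨ψ, hψ, hfψ⟩ := hf N F g hN hF hF' hg α (e.symm.toLinearMap ∘ₗ β) (by
    rw [LinearMap.comp_assoc, ← hαβ]
    ext x
    simp)
  exact ⟨ψ, hψ, by rw [LinearMap.comp_assoc, hfψ]; ext x; simp⟩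

theorem IsResolved.of_subsingleton (C : ModuleCat.{u} B) [Subsingleton C] (n : ℕ) :
    IsResolved n C :=
  ⟨ModuleCat.of B PUnit, 0, inferInstanceAs (Module.Finite B PUnit.{u + 1}),
    (have : Module.Projective B (ModuleCat.of B PUnit.{u + 1}) :=
      inferInstanceAs (Module.Projective B PUnit.{u + 1})
    pdLE_of_projective _).mono (Nat.zero_le n),
    fun _ _ _ _ _ _ _ _ _ _ => ⟨0, LinearMap.ext fun _ => Subsingleton.elim (α := PUnit) _ _,
      LinearMap.ext fun _ => Subsingleton.elim _ _⟩⟩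

theorem IsResolved.of_shortExact [IsNoetherianRing B] {n : ℕ} {C₁ C₂ C₃ : ModuleCat.{u} B}
    {i : C₁ →ₗ[B] C₂} {c : C₂ →ₗ[B] C₃} (hC : ShortExact i c) (h₁ : IsResolved n C₁)
    (h₃ : IsResolved n C₃) : IsResolved n C₂ := by
  obtain ⟨X₁, f₁, hX₁, hpd₁, hf₁⟩ := h₁
  obtain ⟨X₃, f₃, hX₃, hpd₃, hf₃⟩ := h₃
  obtain ⟨F, p, hF, hF', hp⟩ := exists_projective_presentation X₃
  obtain ⟨φ, hφ⟩ := Module.projective_lifting_property c (f₃ ∘ₗ p) hC.2.2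
  obtain ⟨φ', hφ'⟩ := exists_comp_eq_of_exact hC.1 hC.2.1 (φ ∘ₗ (LinearMap.ker p).subtype) (by
    rw [← LinearMap.comp_assoc, hφ]
    ext k
    simp)
  obtain ⟨h, hh⟩ := hf₁.exists_lift (N := ModuleCat.of B (LinearMap.ker p))
    ((shortExact_ker hp).inP_left (.of_projective hF hF') ⟨hX₃, n, hpd₃⟩) φ'
  obtain ⟨X₂, ι, j, π, hιπ, hπj, hαj, hdesc, hext⟩ := exists_pushout p hp h
  obtain ⟨f₂, hfι, hfj⟩ := hdesc C₂ (i ∘ₗ f₁) φ (by rw [← hφ', ← hh]; rfl)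
  refine ⟨X₂, f₂, (hιπ.inP_middle ⟨hX₁, n, hpd₁⟩ ⟨hX₃, n, hpd₃⟩).1, hιπ.pdLE_middle hpd₁ hpd₃,
    .of_shortExact hιπ hC.1 hC.2.1 hfι (hext _ _ _ ?_ ?_) hf₁ hf₃⟩
  · rw [LinearMap.comp_assoc, hfι, ← LinearMap.comp_assoc, hC.2.1.linearMap_comp_eq_zero,
      LinearMap.comp_assoc, hιπ.2.1.linearMap_comp_eq_zero, LinearMap.zero_comp,
      LinearMap.comp_zero]
  · rw [LinearMap.comp_assoc, hfj, hφ, LinearMap.comp_assoc, hπj]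

end Lifting

section Finiteness

variable {B : Type u} [Ring B] [IsArtinianRing B]

theorem IsRightApprox.exists_isMinimalRightApprox {X M : ModuleCat.{u} B} {f : X →ₗ[B] M}
    (hf : IsRightApprox InP f) :
    ∃ (Y : ModuleCat.{u} B) (g : Y →ₗ[B] M), IsMinimalRightApprox InP g := by
  induction hl : Module.length B X using WellFoundedLT.induction generalizing X with
  | ind l ih =>
    by_cases hmin : ∀ g : X →ₗ[B] X, f ∘ₗ g = f → Function.Bijective g
    · exact ⟨X, f, hf, hmin⟩
    push Not at hmin
    obtain ⟨g, hg, hbij⟩ := hmin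
    have := hf.1.1
    obtain ⟨m, hm⟩ := Filter.eventually_atTop.1 g.eventually_isCompl_ker_pow_range_pow
    have hcompl := hm (m + 1) (Nat.le_succ m)
    have hfg : ∀ k x, f ((g ^ k) x) = f x := by
      intro k
      induction k with
      | zero => simp
      | succ k ihk =>
        intro x
        rw [pow_succ, Module.End.mul_apply, ihk]
        exact LinearMap.congr_fun hg x
    set V := LinearMap.range (g ^ (m + 1)) with hV
    have hVtop : V ≠ ⊤ := fun htop => hbij <| by
      have hsurj : Function.Surjective g := by
        have : Function.Surjective (g ∘ₗ g ^ m) := by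
          rw [← Module.End.mul_eq_comp, ← pow_succ']
          exact LinearMap.range_eq_top.1 htop
        exact Function.Surjective.of_comp (g := g ^ m) this
      exact IsNoetherian.bijective_of_surjective_endomorphism g hsurj
    refine ih (Module.length B V) (hl ▸ Submodule.length_lt hVtop) (X := ModuleCat.of B V)
      (f := f ∘ₗ V.subtype) ⟨⟨inferInstanceAs (Module.Finite B V), ?_⟩, ?_⟩ rfl
    · obtain ⟨n, hn⟩ := hf.1.2
      refine ⟨n, hn.retract V.subtype (V.projectionOnto _ hcompl.symm) ?_⟩
      ext x
      simp
    · intro Y hY q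
      obtain ⟨h, hh⟩ := hf.2 Y hY q
      refine ⟨(g ^ (m + 1)).rangeRestrict ∘ₗ h, ?_⟩
      rw [← hh]
      ext y
      exact hfg (m + 1) (h y)

theorem ContravariantlyFinite.exists_isResolved (hcf : ContravariantlyFinite (A := B) InP)
    (M : ModuleCat.{u} B) [Module.Finite B M] : ∃ n, IsResolved n M := by
  obtain ⟨X, f, hf⟩ := hcf M inferInstance
  obtain ⟨Y, g, hg⟩ := hf.exists_isMinimalRightApprox
  obtain ⟨n, hn⟩ := hg.1.1.2
  exact ⟨n, Y, g, hg.1.1.1, hn, hg.hasLifting⟩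

theorem ContravariantlyFinite.exists_isResolved_simple_quotient
    (hcf : ContravariantlyFinite (A := B) InP) {M : Type u} [AddCommGroup M] [Module B M]
    (hM : IsFiniteLength B M) :
    ∃ n, ∀ (S : ModuleCat.{u} B) [IsSimpleModule B S] (p : M →ₗ[B] S),
      Function.Surjective p → IsResolved n S := by
  induction hM with
  | of_subsingleton =>
    refine ⟨0, fun S hS p hp => ?_⟩
    have := IsSimpleModule.nontrivial B S
    exact absurd hp.subsingleton (not_subsingleton S)
  | @of_simple_quotient M _ _ N hQ hN ih =>
    obtain ⟨n, hn⟩ := ih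
    have : Module.Finite B (ModuleCat.of B (M ⧸ N)) :=
      inferInstanceAs (Module.Finite B (M ⧸ N))
    obtain ⟨m, hm⟩ := hcf.exists_isResolved (ModuleCat.of B (M ⧸ N))
    refine ⟨max m n, fun S hS p hp => ?_⟩
    rcases LinearMap.surjective_or_eq_zero (p ∘ₗ N.subtype) with h | h
    · exact (hn S _ h).mono (le_max_right _ _)
    · have hle : N ≤ LinearMap.ker p := fun x hx => LinearMap.congr_fun h ⟨x, hx⟩
      have hsurj : Function.Surjective (N.liftQ p hle) := fun s => by
        obtain ⟨x, rfl⟩ := hp s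
        exact ⟨N.mkQ x, rfl⟩
      have hne : N.liftQ p hle ≠ 0 := fun h0 => by
        have := IsSimpleModule.nontrivial B S
        obtain ⟨s, hs⟩ := exists_ne (0 : S)
        obtain ⟨x, rfl⟩ := hsurj s
        exact hs (by rw [h0]; rfl)
      exact (hm.of_equiv (LinearEquiv.ofBijective _
        (LinearMap.bijective_of_ne_zero hne))).mono (le_max_left _ _)

theorem ContravariantlyFinite.exists_forall_isResolved
    (hcf : ContravariantlyFinite (A := B) InP) :
    ∃ n, ∀ (M : ModuleCat.{u} B) [Module.Finite B M], IsResolved n M := by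
  obtain ⟨n, hn⟩ := hcf.exists_isResolved_simple_quotient
    (isFiniteLength_iff_isNoetherian_isArtinian.2 ⟨inferInstance, inferInstance⟩ :
      IsFiniteLength B B)
  refine ⟨n, fun M hM => ?_⟩
  have : ∀ {M : Type u} [AddCommGroup M] [Module B M], IsFiniteLength B M →
      IsResolved n (ModuleCat.of B M) := by
    intro M _ _ hM
    induction hM with
    | @of_subsingleton M _ _ hM =>
      have : Subsingleton (ModuleCat.of B M) := hM
      exact .of_subsingleton _ _
    | @of_simple_quotient M _ _ N hQ hN ih =>
      have : IsSimpleModule B (ModuleCat.of B (M ⧸ N)) := hQ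
      have := IsSimpleModule.nontrivial B (M ⧸ N)
      obtain ⟨x, hx⟩ := exists_ne (0 : M ⧸ N)
      refine .of_shortExact (C₁ := ModuleCat.of B N) (C₂ := ModuleCat.of B M)
        (C₃ := ModuleCat.of B (M ⧸ N)) (i := N.subtype) (c := N.mkQ)
        ⟨Subtype.val_injective, LinearMap.exact_subtype_mkQ N, N.mkQ_surjective⟩ ih
        (hn _ (LinearMap.toSpanSingleton B (M ⧸ N) x)
          (IsSimpleModule.toSpanSingleton_surjective B hx))
  exact this (isFiniteLength_iff_isNoetherian_isArtinian.2 ⟨inferInstance, inferInstance⟩)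

theorem ContravariantlyFinite.exists_forall_pdLE (hcf : ContravariantlyFinite (A := B) InP) :
    ∃ n, ∀ M : ModuleCat.{u} B, InP M → pdLE M n := by
  obtain ⟨n, hn⟩ := hcf.exists_forall_isResolved
  refine ⟨n, fun M hM => ?_⟩
  have := hM.1
  obtain ⟨X, f, -, hX, hf⟩ := hn M
  obtain ⟨s, hs⟩ := hf.exists_lift hM LinearMap.id
  exact hX.retract s f hs

end Finiteness

section InjectiveEnvelope

variable {B : Type u} [Ring B]

/-- A submodule of an essential extension of `M` annihilated by the radical lies in `M`. -/
theorem mem_of_forall_jacobson_smul_eq_zero [IsSemisimpleRing (B ⧸ Ring.jacobson B)] {E : Type*}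
    [AddCommGroup E] [Module B E] {M : Submodule B E}
    (hM : ∀ D : Submodule B E, Disjoint D M → D = ⊥) {x : E}
    (hx : ∀ a ∈ Ring.jacobson B, a • x = 0) : x ∈ M := by
  let T : Submodule B E :=
    { carrier := {x | ∀ a ∈ Ring.jacobson B, a • x = 0}
      add_mem' := fun hx hy a ha => by rw [smul_add, hx a ha, hy a ha, add_zero]
      zero_mem' := fun a _ => smul_zero a
      smul_mem' := fun b x hx a ha => by
        rw [smul_smul]
        exact hx _ (Ideal.mul_mem_right b _ ha) }
  have h : Module.IsTorsionBySet B T (Ring.jacobson B) := fun y a => Subtype.ext (y.2 a a.2)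
  have : IsSemisimpleModule B T := by
    let _ := h.module
    exact (h.semilinearMap.isSemisimpleModule_iff_of_bijective Function.bijective_id).2
      inferInstance
  obtain ⟨D, hD⟩ := exists_isCompl (M.comap T.subtype)
  have hDM : D.map T.subtype = ⊥ := hM _ <| by
    rw [Submodule.disjoint_def]
    rintro _ ⟨y, hy, rfl⟩ hyM
    have := (Submodule.disjoint_def.1 hD.disjoint) y hyM hy
    simp [this]
  rw [Submodule.map_injective_of_injective T.subtype_injective
    (hDM.trans (Submodule.map_bot _).symm)] at hD
  have : (⟨x, hx⟩ : T) ∈ M.comap T.subtype := by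
    rw [eq_top_of_isCompl_bot hD]
    trivial
  exact this

/-- A module is noetherian over `R` if its elements annihilated by the nilpotent ideal `J` lie in a
noetherian `R`-submodule. -/
theorem isNoetherian_of_forall_smul_eq_zero (R : Type*) [CommRing R] [IsNoetherianRing R]
    [Algebra R B] [Module.Finite R B] {E : Type*} [AddCommGroup E] [Module R E] [Module B E]
    [IsScalarTower R B E] {J : Ideal B} (hJ : IsNilpotent J) {M : Submodule R E}
    [IsNoetherian R M] (hM : ∀ x, (∀ a ∈ J, a • x = 0) → x ∈ M) : IsNoetherian R E := by
  have := IsScalarTower.to_smulCommClass' (R := R) (A := B) (M := E)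
  let T (k : ℕ) : Submodule R E :=
    { carrier := {x | ∀ a ∈ J ^ k, a • x = 0}
      add_mem' := fun hx hy a ha => by rw [smul_add, hx a ha, hy a ha, add_zero]
      zero_mem' := fun a _ => smul_zero a
      smul_mem' := fun r x hx a ha => by rw [smul_comm, hx a ha, smul_zero] }
  have hT : ∀ k, IsNoetherian R (T k) := by
    intro k
    induction k with
    | zero =>
      have : Subsingleton (T 0) := ⟨fun x y => Subtype.ext <| by
        have h (z : T 0) : (z : E) = 0 := by
          rw [← one_smul B (z : E)]
          exact z.2 1 (by rw [Submodule.pow_zero, Ideal.one_eq_top]; trivial)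
        rw [h, h]⟩
      infer_instance
    | succ k ih =>
      obtain ⟨s, hs⟩ := IsNoetherian.noetherian (J.restrictScalars R)
      have hsJ (i : s) : (i : B) ∈ J :=
        show (i : B) ∈ J.restrictScalars R from hs ▸ Submodule.subset_span i.2
      let g : T (k + 1) →ₗ[R] (s → T k) :=
        { toFun := fun x i => ⟨(i : B) • (x : E), fun a ha => by
            rw [smul_smul]
            exact x.2 _ (by rw [Submodule.pow_succ]; exact Ideal.mul_mem_mul ha (hsJ i))⟩
          map_add' := fun x y => by
            ext i
            exact smul_add ..
          map_smul' := fun r x => by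
            ext i
            exact smul_comm .. }
      have hker (x : LinearMap.ker g) : ((x : T (k + 1)) : E) ∈ M := by
        refine hM _ fun a ha => ?_
        have ha' : a ∈ Submodule.span R (s : Set B) := by rwa [hs]
        clear ha
        induction ha' using Submodule.span_induction with
        | mem b hb => exact congrArg Subtype.val (congrFun x.2 ⟨b, hb⟩)
        | zero => exact zero_smul ..
        | add b c _ _ hb hc => rw [add_smul, hb, hc, add_zero]
        | smul r b _ hb => rw [smul_assoc, hb, smul_zero]
      have : IsNoetherian R (LinearMap.ker g) :=
        isNoetherian_of_injective (((T (k + 1)).subtype ∘ₗ (LinearMap.ker g).subtype).codRestrict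
          M hker) fun x y h => Subtype.ext (Subtype.ext (Subtype.ext_iff.1 h :))
      exact isNoetherian_of_range_eq_ker (LinearMap.ker g).subtype g (Submodule.range_subtype _)
  obtain ⟨k, hk⟩ := hJ
  have := hT k
  refine isNoetherian_of_injective (LinearMap.id.codRestrict (T k) fun x a ha => ?_)
    fun x y h => congrArg Subtype.val h
  rw [hk] at ha
  rw [show a = 0 from ha, zero_smul]

theorem Module.Injective.of_retract {E Q : Type u} [AddCommGroup E] [AddCommGroup Q]
    [Module B E] [Module B Q] [Module.Injective B Q] (s : E →ₗ[B] Q) (r : Q →ₗ[B] E)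
    (h : r ∘ₗ s = LinearMap.id) : Module.Injective B E where
  out X Y _ _ _ _ f hf g := by
    obtain ⟨k, hk⟩ := Module.Injective.out f hf (s ∘ₗ g)
    refine ⟨r ∘ₗ k, fun x => ?_⟩
    rw [LinearMap.comp_apply, hk]
    exact LinearMap.congr_fun h (g x)

/-- A submodule of an injective module is contained in an essential extension which is a direct
summand. -/
theorem exists_essential_injective {Q : Type u} [AddCommGroup Q] [Module B Q]
    [Module.Injective B Q] (M : Submodule B Q) :
    ∃ E : Submodule B Q, M ≤ E ∧ (∀ D ≤ E, Disjoint D M → D = ⊥) ∧ Module.Injective B E := by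
  obtain ⟨E, hME, hE⟩ := zorn_le_nonempty₀ {E : Submodule B Q | ∀ D ≤ E, Disjoint D M → D = ⊥}
    (fun c hc hchain _ _ => ⟨sSup c, fun D hD hDM =>
      have : Disjoint D (sSup c) := hchain.directedOn.disjoint_sSup_right.2 fun z hz =>
        disjoint_iff.2 (hc hz _ inf_le_right (hDM.mono_left inf_le_left))
      this.eq_bot_of_le hD, fun z hz => le_sSup hz⟩) M (fun D hD hDM => hDM.eq_bot_of_le hD)
  obtain ⟨C, hC⟩ := zorn_le₀ {C : Submodule B Q | Disjoint C E}
    (fun c hc hchain => ⟨sSup c, hchain.directedOn.disjoint_sSup_left.2 fun z hz => hc hz,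
      fun z hz => le_sSup hz⟩)
  have hCE : Disjoint C E := hC.1
  obtain ⟨θ, hθ⟩ := Module.Injective.out (C.mkQ ∘ₗ E.subtype) (by
    rw [← LinearMap.ker_eq_bot, LinearMap.ker_eq_bot']
    intro x hx
    have : (x : Q) ∈ C := (Submodule.Quotient.mk_eq_zero C).1 hx
    exact Subtype.ext (Submodule.disjoint_def.1 hCE _ this x.2)) E.subtype
  have hle : E ≤ LinearMap.range θ := fun x hx => ⟨_, hθ ⟨x, hx⟩⟩
  have hrange : LinearMap.range θ ≤ E := hE.2 (fun D hD hDM => ?_) hle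
  swap
  · have hDE : Disjoint D E :=
      disjoint_iff.2 (hE.1 _ inf_le_right (hDM.mono_left inf_le_left))
    have hC' : D.comap (θ ∘ₗ C.mkQ) ≤ C := hC.2 (by
      refine Submodule.disjoint_def.2 fun x hx hxE => ?_
      have : θ (C.mkQ x) = x := hθ ⟨x, hxE⟩
      have hxD : θ (C.mkQ x) ∈ D := hx
      rw [this] at hxD
      exact Submodule.disjoint_def.1 hDE x hxD hxE) fun x hx => by
        have : C.mkQ x = 0 := (Submodule.Quotient.mk_eq_zero C).2 hx
        simp [this]
    refine (Submodule.eq_bot_iff D).2 fun d hd => ?_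
    obtain ⟨y, rfl⟩ := hD hd
    obtain ⟨x, rfl⟩ := C.mkQ_surjective y
    have : C.mkQ x = 0 := (Submodule.Quotient.mk_eq_zero C).2 (hC' hd)
    rw [this, map_zero]
  refine ⟨E, hME, hE.1, .of_retract E.subtype
    ((θ ∘ₗ C.mkQ).codRestrict E fun x => hrange ⟨_, rfl⟩) ?_⟩
  ext x
  exact hθ x

/-- Over an artin algebra, finitely generated modules embed in finitely generated injective
modules. -/
theorem exists_finite_injective (R : Type*) [CommRing R] [IsArtinianRing R] [Algebra R B]
    [Module.Finite R B] (M : ModuleCat.{u} B) [Module.Finite B M] :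
    ∃ (E : ModuleCat.{u} B) (i : M →ₗ[B] E), Function.Injective i ∧ Module.Finite B E ∧
      Module.Injective B E := by
  have : IsArtinianRing B := .of_finite R B
  let Q := Injective.under M
  have : CategoryTheory.Injective (ModuleCat.of B Q) :=
    inferInstanceAs (CategoryTheory.Injective (Injective.under M))
  have : Module.Injective B Q := Module.injective_module_of_injective_object B Q
  let ι : M →ₗ[B] Q := (Injective.ι M).hom
  have hι : Function.Injective ι := (ModuleCat.mono_iff_injective _).1 inferInstance
  obtain ⟨E, hME, hess, hE⟩ := exists_essential_injective (LinearMap.range ι)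
  let i : M →ₗ[B] E := ι.codRestrict E fun x => hME ⟨x, rfl⟩
  have hi : Function.Injective i := fun x y h => hι (congrArg Subtype.val h)
  refine ⟨ModuleCat.of B E, i, hi, ?_, hE⟩
  let _ : Module R E := Module.compHom E (algebraMap R B)
  have : IsScalarTower R B E := ⟨fun r b x => by
    rw [Algebra.smul_def, mul_smul]
    rfl⟩
  have hsoc {x : E} (hx : ∀ a ∈ Ring.jacobson B, a • x = 0) : x ∈ LinearMap.range i :=
    mem_of_forall_jacobson_smul_eq_zero (fun D hD => by
      refine Submodule.map_injective_of_injective E.subtype_injective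
        ((hess _ (Submodule.map_subtype_le E D) ?_).trans (Submodule.map_bot _).symm)
      rw [Submodule.disjoint_def]
      rintro _ ⟨y, hy, rfl⟩ ⟨m, hm⟩
      have : y = 0 := Submodule.disjoint_def.1 hD y hy ⟨m, Subtype.ext hm⟩
      simp [this]) hx
  have : Module.Finite R (LinearMap.range i) := .trans B _
  have : IsNoetherian R ((LinearMap.range i).restrictScalars R) :=
    isNoetherian_of_isNoetherianRing_of_finite R (LinearMap.range i)
  have : IsNoetherian R E :=
    isNoetherian_of_forall_smul_eq_zero R (IsSemiprimaryRing.isNilpotent (R := B))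
      (M := (LinearMap.range i).restrictScalars R) fun x hx => hsoc hx
  exact Module.Finite.of_restrictScalars_finite R B E

end InjectiveEnvelope

section Finitistic

variable {B : Type u} [Ring B]

/-- If the indecomposable finitely generated injective modules are resolved in degree `t`, so are
all finitely generated injective modules. -/
theorem isResolved_of_injective [IsArtinianRing B] {t : ℕ}
    (h : ∀ E : ModuleCat.{u} B, Module.Finite B E → Module.Injective B E → Indec E →
      IsResolved t E)
    (E : ModuleCat.{u} B) (hE : Module.Finite B E) (hE' : Module.Injective B E) :
    IsResolved t E := by
  induction hl : Module.length B E using WellFoundedLT.induction generalizing E with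
  | ind l ih =>
    by_cases hs : Subsingleton E
    · exact .of_subsingleton E t
    by_cases hind : ∀ e : E →ₗ[B] E, e ∘ₗ e = e → e = 0 ∨ e = LinearMap.id
    · exact h E hE hE' ⟨hs, hind⟩
    push Not at hind
    obtain ⟨e, he, he0, he1⟩ := hind
    have hee (x : E) : e (e x) = e x := LinearMap.congr_fun he x
    have hker : LinearMap.ker e ≠ ⊤ := fun h => he0 (LinearMap.ker_eq_top.1 h)
    have hrange : LinearMap.range e ≠ ⊤ := fun h => he1 <| LinearMap.ext fun x => by
      obtain ⟨y, rfl⟩ := LinearMap.range_eq_top.1 h x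
      exact hee y
    refine .of_shortExact (C₁ := ModuleCat.of B (LinearMap.ker e))
      (C₃ := ModuleCat.of B (LinearMap.range e)) (i := (LinearMap.ker e).subtype)
      (c := e.rangeRestrict)
      ⟨Subtype.val_injective, LinearMap.exact_iff.2 ?_, e.surjective_rangeRestrict⟩
      (ih _ (hl ▸ Submodule.length_lt hker) _ (inferInstanceAs (Module.Finite B (LinearMap.ker e)))
        (.of_retract (LinearMap.ker e).subtype
          ((LinearMap.id - e).codRestrict _ fun x => by simp [hee]) ?_) rfl)
      (ih _ (hl ▸ Submodule.length_lt hrange) _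
        (inferInstanceAs (Module.Finite B (LinearMap.range e)))
        (.of_retract (LinearMap.range e).subtype e.rangeRestrict ?_) rfl)
    · rw [LinearMap.ker_rangeRestrict, Submodule.range_subtype]
    · ext x
      simp
    · ext ⟨_, y, rfl⟩
      exact hee y

/-- A module in `𝒫` that embeds in a module resolved in degree `t` also embeds in a module of
projective dimension at most `t`, with cokernel in `𝒫`. -/
theorem InP.exists_shortExact {t : ℕ} {M E : ModuleCat.{u} B} (hM : InP M) (hE : IsResolved t E)
    {i : M →ₗ[B] E} (hi : Function.Injective i) :
    ∃ (X N : ModuleCat.{u} B) (h : M →ₗ[B] X) (q : X →ₗ[B] N),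
      ShortExact h q ∧ pdLE X t ∧ InP N := by
  obtain ⟨X, f, hX, hpd, hf⟩ := hE
  obtain ⟨h, rfl⟩ := hf.exists_lift hM i
  have hex : ShortExact (M₃ := ModuleCat.of B (X ⧸ LinearMap.range h)) h
      (LinearMap.range h).mkQ :=
    ⟨Function.Injective.of_comp (f := f) hi, LinearMap.exact_map_mkQ_range h,
      Submodule.mkQ_surjective _⟩
  exact ⟨X, _, h, _, hex, hpd, hex.inP_right hM ⟨hX, t, hpd⟩⟩

theorem pdLE_of_forall_isResolved {t m : ℕ}
    (h : ∀ M : ModuleCat.{u} B, InP M → ∃ (E : ModuleCat.{u} B) (i : M →ₗ[B] E),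
      Function.Injective i ∧ IsResolved t E)
    (hm : ∀ M : ModuleCat.{u} B, InP M → pdLE M (t + m)) (M : ModuleCat.{u} B) (hM : InP M) :
    pdLE M t := by
  induction m generalizing M with
  | zero => exact hm M hM
  | succ m ih =>
    refine ih (fun M hM => ?_) M hM
    obtain ⟨E, i, hi, hE⟩ := h M hM
    obtain ⟨X, N, _, _, hex, hX, hN⟩ := hM.exists_shortExact hE hi
    exact hex.pdLE_left (hX.mono (Nat.le_add_right t m)) (hm N hN)

end Finitistic

/-- If `𝒫` is contravariantly finite, then `findim Λ` equals the maximum of the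
projective dimensions of the minimal right `𝒫`-approximations of the indecomposable
injectives; in particular it is finite. -/
theorem stmt_11 (Λ : Type u) [Ring Λ] (R : Type u) [CommRing R] [IsArtinianRing R]
    [Algebra R Λ] [Module.Finite R Λ]
    (hcf : ContravariantlyFinite (fun M : ModuleCat.{u} Λᵐᵒᵖ => InP M))
    {n : ℕ} (I : Fin n → ModuleCat.{u} Λᵐᵒᵖ) (hI : IsCompleteIndecInjFamily I)
    (A : Fin n → ModuleCat.{u} Λᵐᵒᵖ) (f : ∀ j, A j →ₗ[Λᵐᵒᵖ] I j)
    (hf : ∀ j, IsMinimalRightApprox InP (f j)) :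
    findim Λᵐᵒᵖ = (⨆ j, projDim (A j)) ∧ findim Λᵐᵒᵖ ≠ ⊤ := by
  have : IsArtinianRing Λᵐᵒᵖ := .of_finite R Λᵐᵒᵖ
  obtain ⟨t, ht⟩ : ∃ t : ℕ, (⨆ j, projDim (A j)) = t := by
    choose d hd using fun j => (hf j).1.1.2
    obtain ⟨N, hN⟩ := (Set.finite_range d).bddAbove
    have : (⨆ j, projDim (A j)) ≤ (N : ℕ∞) :=
      iSup_le fun j => projDim_le_iff.2 ((hd j).mono (hN ⟨j, rfl⟩))
    exact ENat.ne_top_iff_exists.1 (ne_top_of_le_ne_top (ENat.natCast_ne_top N) this) |>.imp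
      fun _ => Eq.symm
  have hres := isResolved_of_injective (B := Λᵐᵒᵖ) (t := t) fun E hE hE' hind => by
    obtain ⟨j, ⟨e⟩⟩ := hI.2.1 E hE hE' hind
    exact IsResolved.of_equiv ⟨A j, f j, (hf j).1.1.1,
      projDim_le_iff.1 (ht ▸ le_iSup (fun j => projDim (A j)) j), (hf j).hasLifting⟩ e.symm
  obtain ⟨m, hm⟩ := ContravariantlyFinite.exists_forall_pdLE hcf
  have hpd := pdLE_of_forall_isResolved (B := Λᵐᵒᵖ) (t := t) (m := m) (fun M hM => by
    have := hM.1
    obtain ⟨E, i, hi, hE, hE'⟩ := exists_finite_injective R M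
    exact ⟨E, i, hi, hres E hE hE'⟩) fun M hM => (hm M hM).mono (Nat.le_add_left m t)
  have hle : findim Λᵐᵒᵖ ≤ t := sSup_le (by
    rintro _ ⟨M, hM, rfl⟩
    exact projDim_le_iff.2 (hpd M hM))
  refine ⟨le_antisymm (ht ▸ hle) (iSup_le fun j => le_sSup ⟨A j, (hf j).1.1, rfl⟩),
    ne_top_of_le_ne_top (ENat.natCast_ne_top t) hle⟩
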